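/- Let T = [[1,0],[0,e^{iπ/4}]]. For all bits x, z, r ∈ {false, true}, define the set Sat(x,z,r) of tuples (x', z', r', u) of bits satisfying: x' = x, u = x, if x = false then z' = z and r' = r, and if x = true then z' ∈ {false, true} is arbitrary and r' = r XOR (z ∧ ¬z'). Then (-1)^r · T σ[x,z] T† = Σ_{(x',z',r',u) ∈ Sat(x,z,r)} (-1)^{r'} · (1/√2)^{u} · σ[x',z'], as an equality of 2×2 complex matrices (where (1/√2)^{false} = 1 and (1/√2)^{true} = 1/√2, and (-1)^b = -1 iff b = true). -/

import Mathlib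

open Matrix

/-- `σ[x,z]`: `σ[00] = I`, `σ[01] = Z`, `σ[10] = X`, `σ[11] = Y`. -/
noncomputable def pauliOf : Bool × Bool → Matrix (Fin 2) (Fin 2) ℂ
  | (false, false) => !![1, 0; 0, 1]
  | (false, true) => !![1, 0; 0, -1]
  | (true, false) => !![0, 1; 1, 0]
  | (true, true) => !![0, -Complex.I; Complex.I, 0]

/-- The T gate `T = [[1,0],[0,e^{iπ/4}]]`. -/
noncomputable def Tgate : Matrix (Fin 2) (Fin 2) ℂ :=
  !![1, 0; 0, Complex.exp (Complex.I * Real.pi / 4)]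

/-- The satisfying assignments `(x', z', r', u)` of the Boolean T-gate constraint
for input bits `(x, z, r)`. -/
def satT (x z r : Bool) : Finset (Bool × Bool × Bool × Bool) :=
  Finset.univ.filter fun q =>
    q.1 = x ∧ q.2.2.2 = x ∧
    (x = false → q.2.1 = z ∧ q.2.2.1 = r) ∧
    (x = true → q.2.2.1 = xor r (z && !q.2.1))

/-!
Conjugation by the phase gate `diag(1, e^{iθ})` rotates the Bloch sphere by `θ` about the `Z`-axis:
it fixes `I` and `Z` and rotates the `(X, Y)`-plane. At `θ = π / 4` both `cos θ` and `sin θ` are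
`1 / √2`, so `X ↦ (X + Y) / √2` and `Y ↦ (-X + Y) / √2`. The only sign that depends on `z` is thus
the one of the `X`-branch, which is what `r' = r XOR (z ∧ ¬z')` records.
-/

/-- The phase gate `P(θ) = diag(1, e^{iθ})`, the family of `Z`-axis rotations (up to a global phase)
of which the T gate is the member `θ = π / 4`. -/
noncomputable def phaseGate (θ : ℝ) : Matrix (Fin 2) (Fin 2) ℂ :=
  !![1, 0; 0, Complex.exp (θ * Complex.I)]

namespace phaseGate

theorem conjTranspose_eq (θ : ℝ) :
    (phaseGate θ)ᴴ = !![1, 0; 0, Complex.exp (-(θ * Complex.I))] := by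
  ext i j
  fin_cases i <;> fin_cases j <;> simp [phaseGate, ← Complex.exp_conj]

theorem conj_fin_two (θ : ℝ) (a b c d : ℂ) :
    phaseGate θ * !![a, b; c, d] * (phaseGate θ)ᴴ =
      !![a, b * Complex.exp (-(θ * Complex.I)); c * Complex.exp (θ * Complex.I), d] := by
  have exp_mul_exp_neg : Complex.exp (θ * Complex.I) * Complex.exp (-(θ * Complex.I)) = 1 := by
    rw [← Complex.exp_add, add_neg_cancel, Complex.exp_zero]
  rw [conjTranspose_eq, phaseGate]
  simp [mul_right_comm _ d, exp_mul_exp_neg, mul_comm c]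

theorem conj_pauliOf_false (θ : ℝ) (z : Bool) :
    phaseGate θ * pauliOf (false, z) * (phaseGate θ)ᴴ = pauliOf (false, z) := by
  cases z <;> simp only [pauliOf, conj_fin_two, zero_mul]

theorem conj_pauliOf_true_false (θ : ℝ) :
    phaseGate θ * pauliOf (true, false) * (phaseGate θ)ᴴ =
      (Real.cos θ : ℂ) • pauliOf (true, false) + (Real.sin θ : ℂ) • pauliOf (true, true) := by
  simp only [pauliOf, conj_fin_two, ← neg_mul, ← Complex.ofReal_neg, Complex.exp_mul_I]
  simp

theorem conj_pauliOf_true_true (θ : ℝ) :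
    phaseGate θ * pauliOf (true, true) * (phaseGate θ)ᴴ =
      -(Real.sin θ : ℂ) • pauliOf (true, false) + (Real.cos θ : ℂ) • pauliOf (true, true) := by
  simp only [pauliOf, conj_fin_two, ← neg_mul, ← Complex.ofReal_neg, Complex.exp_mul_I]
  simp [add_mul, add_comm, mul_comm Complex.I, mul_assoc]

end phaseGate

theorem Tgate_eq_phaseGate : Tgate = phaseGate (Real.pi / 4) := by
  rw [Tgate, phaseGate, Complex.ofReal_div, Complex.ofReal_ofNat, mul_comm Complex.I,
    mul_div_right_comm]

theorem Tgate_conj_pauliOf_false (z : Bool) :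
    Tgate * pauliOf (false, z) * Tgateᴴ = pauliOf (false, z) := by
  rw [Tgate_eq_phaseGate, phaseGate.conj_pauliOf_false]

theorem Tgate_conj_pauliOf_true (z : Bool) :
    Tgate * pauliOf (true, z) * Tgateᴴ =
      (Real.sqrt 2 : ℂ)⁻¹ •
        ((if z then (-1 : ℂ) else 1) • pauliOf (true, false) + pauliOf (true, true)) := by
  have sqrt_two_div_two : Real.sqrt 2 / 2 = (Real.sqrt 2)⁻¹ := by
    rw [Real.sqrt_div_self', one_div]
  have cos_eq : (Real.cos (Real.pi / 4) : ℂ) = (Real.sqrt 2 : ℂ)⁻¹ := by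
    rw [Real.cos_pi_div_four, sqrt_two_div_two, Complex.ofReal_inv]
  have sin_eq : (Real.sin (Real.pi / 4) : ℂ) = (Real.sqrt 2 : ℂ)⁻¹ := by
    rw [Real.sin_pi_div_four, sqrt_two_div_two, Complex.ofReal_inv]
  rw [Tgate_eq_phaseGate]
  cases z with
  | false =>
    rw [phaseGate.conj_pauliOf_true_false, cos_eq, sin_eq, if_neg Bool.false_ne_true]
    module
  | true =>
    rw [phaseGate.conj_pauliOf_true_true, cos_eq, sin_eq, if_pos rfl]
    module

theorem satT_false (z r : Bool) : satT false z r = {(false, z, r, false)} := by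
  decide +revert

theorem satT_true (z r : Bool) :
    satT true z r = {(true, false, xor r z, true), (true, true, r, true)} := by
  decide +revert

theorem ite_xor_neg_one {M : Type*} [MulOneClass M] [HasDistribNeg M] (a b : Bool) :
    (if xor a b then (-1 : M) else 1) = (if a then -1 else 1) * (if b then -1 else 1) := by
  cases a <;> cases b <;> simp

/-- Correctness of the Boolean encoding of the T gate: the conjugated signed Pauli
matrix equals the sum of the weighted Pauli matrices represented by the
satisfying assignments of the T-gate constraint. -/
theorem t_gate_encoding_correct (x z r : Bool) :
    (if r then (-1 : ℂ) else 1) • (Tgate * pauliOf (x, z) * Tgateᴴ) =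
      ∑ q ∈ satT x z r,
        ((if q.2.2.1 then (-1 : ℂ) else 1) *
            (if q.2.2.2 then ((Real.sqrt 2 : ℂ))⁻¹ else 1)) •
          pauliOf (q.1, q.2.1) := by
  cases x with
  | false =>
    rw [Tgate_conj_pauliOf_false, satT_false, Finset.sum_singleton]
    simp
  | true =>
    rw [Tgate_conj_pauliOf_true, satT_true, Finset.sum_pair (by simp)]
    simp only [ite_xor_neg_one, if_true]
    module
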